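/- For each a ∈ {2,…,K} let x_a ∈ (μ_a, μ_1) be the unique point with d(μ_1, x_a) = d(μ_a, x_a), and set d_a = (μ_1 − x_a)/(x_a − μ_a). Let N = (N_1,…,N_K) ∈ ℝ_{>0}^K be an allocation with g(μ, N) = 0, let ã ∈ argmax_{a≠1} d(μ_1, x_{1,a})/d(μ_a, x_{1,a}), let x(ã) ∈ (μ_ã, μ_1) be the unique point with d(μ_1, x(ã)) = (K−1)^{-1}·d(μ_ã, x(ã)), and set d(ã) = (μ_1 − x(ã))/(x(ã) − μ_ã). Then, writing N = Σ_{a∈[K]} N_a for the total allocation, (1 + Σ_{a≠1} d_a)^{-1}·N ≤ N_1 ≤ (1 + d(ã))^{-1}·N. -/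

import Mathlib

/-!
Between `μ_a` and `μ_1` two quantities decrease strictly with `x`: the divergence ratio
`d(μ_1, x) / d(μ_a, x)` and the ratio `(μ_1 - x) / (x - μ_a)`. The latter takes the value
`N_a / N_1` at the weighted mean `x_{1,a}`, so comparing `N_a / N_1` with `d_a` or `d(ã)` amounts to
comparing divergence ratios. When `g = 0` the divergence ratios at the weighted means are
nonnegative and add up to `1`: each is at most `1`, which bounds every `N_a / N_1` from above, and
the largest is at least their average `1 / (K - 1)`, which bounds `N_ã / N_1` from below.
-/

open scoped BigOperators

/-- A single-parameter exponential family, given by the log-partition function `b`,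
smooth with positive second derivative on an open interval `Θ`, together with the
inverse `θof` of `b'` on the set of means `S = b'(Θ)`. -/
structure SPEF where
  Θ : Set ℝ
  Θ_isOpen : IsOpen Θ
  Θ_ordConnected : Set.OrdConnected Θ
  Θ_nonempty : Θ.Nonempty
  b : ℝ → ℝ
  b_smooth : ContDiffOn ℝ (⊤ : ℕ∞) b Θ
  b_conv : ∀ t ∈ Θ, 0 < iteratedDeriv 2 b t
  θof : ℝ → ℝ
  θof_mem : ∀ μ ∈ deriv b '' Θ, θof μ ∈ Θ
  θof_spec : ∀ μ ∈ deriv b '' Θ, deriv b (θof μ) = μ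

namespace SPEF

/-- The set of means of the family. -/
def S (F : SPEF) : Set ℝ := deriv F.b '' F.Θ

/-- KL divergence `d(μ, x)` between the members of the family with means `μ` and `x`. -/
noncomputable def d (F : SPEF) (μ x : ℝ) : ℝ :=
  (F.θof μ - F.θof x) * μ - F.b (F.θof μ) + F.b (F.θof x)

end SPEF

/-- A `K`-armed bandit instance with arm distributions in a fixed SPEF; arm `0`
(the paper's arm `1`) is the unique best arm. -/
structure Bandit (K : ℕ) [NeZero K] extends SPEF where
  two_le : 2 ≤ K
  μ : Fin K → ℝ
  μ_mem : ∀ a, μ a ∈ SPEF.S toSPEF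
  μ_best : ∀ a : Fin K, a ≠ 0 → μ a < μ 0

namespace Bandit

variable {K : ℕ} [NeZero K]

/-- KL divergence of the underlying family. -/
noncomputable def d (M : Bandit K) : ℝ → ℝ → ℝ := M.toSPEF.d

/-- The weighted mean `x_{1,a}(N₁, N_a)`. -/
noncomputable def x1 (M : Bandit K) (a : Fin K) (N1 Na : ℝ) : ℝ :=
  (N1 * M.μ 0 + Na * M.μ a) / (N1 + Na)

/-- The index `W_a(N₁, N_a)` of an arm `a ≠ 1`. -/
noncomputable def W (M : Bandit K) (a : Fin K) (N1 Na : ℝ) : ℝ :=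
  N1 * M.d (M.μ 0) (M.x1 a N1 Na) + Na * M.d (M.μ a) (M.x1 a N1 Na)

/-- The set `{2, …, K}` of suboptimal arms. -/
def alt (K : ℕ) [NeZero K] : Finset (Fin K) := Finset.univ.filter (fun a => a ≠ 0)

/-- The anchor function `g(μ, N)`. -/
noncomputable def g (M : Bandit K) (Nv : Fin K → ℝ) : ℝ :=
  (∑ a ∈ alt K, M.d (M.μ 0) (M.x1 a (Nv 0) (Nv a)) / M.d (M.μ a) (M.x1 a (Nv 0) (Nv a))) - 1

end Bandit

open Bandit

lemma strictAntiOn_sub_div_sub {l u : ℝ} (h : l < u) :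
    StrictAntiOn (fun x ↦ (u - x) / (x - l)) (Set.Ioi l) := by
  intro x hx y hy hxy
  rw [Set.mem_Ioi, ← sub_pos] at hx hy
  rw [div_lt_div_iff₀ hy hx, ← sub_pos]
  calc 0 < (u - l) * (y - x) := mul_pos (sub_pos.2 h) (sub_pos.2 hxy)
    _ = (u - x) * (y - l) - (u - y) * (x - l) := by ring

namespace SPEF

variable (F : SPEF)

lemma strictConvexOn_b : StrictConvexOn ℝ F.Θ F.b :=
  strictConvexOn_of_deriv2_pos' F.Θ_ordConnected.convex F.b_smooth.continuousOn fun t ht ↦ by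
    simpa only [iteratedDeriv_eq_iterate] using F.b_conv t ht

lemma differentiableAt_b {t : ℝ} (ht : t ∈ F.Θ) : DifferentiableAt ℝ F.b t :=
  (F.b_smooth.contDiffAt (F.Θ_isOpen.mem_nhds ht)).differentiableAt (by simp)

lemma ordConnected_S : F.S.OrdConnected :=
  (F.Θ_ordConnected.isPreconnected.image _
    (F.b_smooth.continuousOn_deriv_of_isOpen F.Θ_isOpen (by simp))).ordConnected

lemma strictMonoOn_θof : StrictMonoOn F.θof F.S := by
  intro x hx y hy hxy
  have hmono : StrictMonoOn (deriv F.b) F.Θ :=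
    F.strictConvexOn_b.strictMonoOn_deriv fun _ ↦ F.differentiableAt_b
  rwa [← hmono.lt_iff_lt (F.θof_mem x hx) (F.θof_mem y hy), F.θof_spec x hx, F.θof_spec y hy]

lemma d_self (μ : ℝ) : F.d μ μ = 0 := by simp [d]

lemma d_pos {μ x : ℝ} (hμ : μ ∈ F.S) (hx : x ∈ F.S) (hne : μ ≠ x) : 0 < F.d μ x := by
  have hμΘ := F.θof_mem μ hμ
  have hxΘ := F.θof_mem x hx
  have hdiff := F.differentiableAt_b hμΘ
  -- `d μ x` is the gap at `θof x` between `b` and its tangent line at `θof μ`.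
  simp only [d]
  rcases hne.lt_or_gt with hlt | hgt
  · have hθ := F.strictMonoOn_θof hμ hx hlt
    have hslope := F.strictConvexOn_b.deriv_lt_slope hμΘ hxΘ hθ hdiff
    rw [F.θof_spec μ hμ, slope_def_field, lt_div_iff₀ (sub_pos.2 hθ)] at hslope
    linarith
  · have hθ := F.strictMonoOn_θof hx hμ hgt
    have hslope := F.strictConvexOn_b.slope_lt_deriv hxΘ hμΘ hθ hdiff
    rw [F.θof_spec μ hμ, slope_def_field, div_lt_iff₀ (sub_pos.2 hθ)] at hslope
    linarith

lemma d_nonneg {μ x : ℝ} (hμ : μ ∈ F.S) (hx : x ∈ F.S) : 0 ≤ F.d μ x := by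
  rcases eq_or_ne μ x with rfl | hne
  · exact (F.d_self μ).ge
  · exact (F.d_pos hμ hx hne).le

lemma d_eq_d_add_d_add (μ x y : ℝ) :
    F.d μ x = F.d μ y + F.d y x + (F.θof y - F.θof x) * (μ - y) := by
  simp only [d]
  ring

lemma strictAntiOn_d (μ : ℝ) : StrictAntiOn (F.d μ) (F.S ∩ Set.Iic μ) := by
  rintro x ⟨hx, -⟩ y ⟨hy, hyμ⟩ hxy
  have hpos := F.d_pos hy hx hxy.ne'
  have hcross : 0 ≤ (F.θof y - F.θof x) * (μ - y) :=
    mul_nonneg (sub_pos.2 (F.strictMonoOn_θof hx hy hxy)).le (sub_nonneg.2 hyμ)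
  linarith [F.d_eq_d_add_d_add μ x y]

lemma strictMonoOn_d (μ : ℝ) : StrictMonoOn (F.d μ) (F.S ∩ Set.Ici μ) := by
  rintro x ⟨hx, hμx⟩ y ⟨hy, -⟩ hxy
  have hpos := F.d_pos hx hy hxy.ne
  have hcross : 0 ≤ (F.θof x - F.θof y) * (μ - x) :=
    mul_nonneg_of_nonpos_of_nonpos (sub_neg.2 (F.strictMonoOn_θof hx hy hxy)).le
      (sub_nonpos.2 hμx)
  linarith [F.d_eq_d_add_d_add μ y x]

lemma strictAntiOn_d_div_d {l u : ℝ} (hl : l ∈ F.S) (hu : u ∈ F.S) :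
    StrictAntiOn (fun x ↦ F.d u x / F.d l x) (Set.Ioc l u) := by
  intro x hx y hy hxy
  have hxS := F.ordConnected_S.out hl hu (Set.Ioc_subset_Icc_self hx)
  have hyS := F.ordConnected_S.out hl hu (Set.Ioc_subset_Icc_self hy)
  exact div_lt_div₀ (F.strictAntiOn_d u ⟨hxS, hx.2⟩ ⟨hyS, hy.2⟩ hxy)
    (F.strictMonoOn_d l ⟨hxS, hx.1.le⟩ ⟨hyS, hy.1.le⟩ hxy).le
    (F.d_nonneg hu hxS) (F.d_pos hl hxS hx.1.ne)

end SPEF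

namespace Bandit

variable {K : ℕ} [NeZero K]

lemma alt_eq_erase : alt K = Finset.univ.erase 0 := Finset.filter_ne' _ _

lemma mem_alt {a : Fin K} : a ∈ alt K ↔ a ≠ 0 := by simp [alt]

lemma card_alt : ((alt K).card : ℝ) = K - 1 := by
  rw [alt_eq_erase, Finset.cast_card_erase_of_mem (Finset.mem_univ _), Finset.card_fin]

lemma sum_eq_add_sum_alt (f : Fin K → ℝ) : ∑ a, f a = f 0 + ∑ a ∈ alt K, f a := by
  rw [alt_eq_erase, Finset.add_sum_erase _ _ (Finset.mem_univ _)]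

variable (M : Bandit K) {a : Fin K} {N1 Na x : ℝ}

/-- The divergence ratio `d(μ_1, x) / d(μ_a, x)`, whose values at the weighted means `x_{1,a}` are
the summands of the anchor function. -/
noncomputable def divRatio (a : Fin K) (x : ℝ) : ℝ := M.d (M.μ 0) x / M.d (M.μ a) x

/-- The allocation ratio `N_a / N_1` for which `x` is the weighted mean `x_{1,a}(N_1, N_a)`; at the
points `x_a` and `x(ã)` it gives the constants `d_a` and `d(ã)` of the paper. -/
noncomputable def allocRatio (a : Fin K) (x : ℝ) : ℝ := (M.μ 0 - x) / (x - M.μ a)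

lemma mem_S_of_mem_Ioc (hx : x ∈ Set.Ioc (M.μ a) (M.μ 0)) : x ∈ M.S :=
  M.ordConnected_S.out (M.μ_mem a) (M.μ_mem 0) (Set.Ioc_subset_Icc_self hx)

lemma d_pos (hx : x ∈ Set.Ioc (M.μ a) (M.μ 0)) : 0 < M.d (M.μ a) x :=
  M.toSPEF.d_pos (M.μ_mem a) (M.mem_S_of_mem_Ioc hx) hx.1.ne

lemma divRatio_nonneg (hx : x ∈ Set.Ioc (M.μ a) (M.μ 0)) : 0 ≤ M.divRatio a x :=
  div_nonneg (M.d_nonneg (M.μ_mem 0) (M.mem_S_of_mem_Ioc hx)) (M.d_pos hx).le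

lemma divRatio_eq_iff (hx : x ∈ Set.Ioc (M.μ a) (M.μ 0)) {c : ℝ} :
    M.divRatio a x = c ↔ M.d (M.μ 0) x = c * M.d (M.μ a) x :=
  div_eq_iff (M.d_pos hx).ne'

lemma divRatio_le_divRatio_iff {y : ℝ} (hx : x ∈ Set.Ioc (M.μ a) (M.μ 0))
    (hy : y ∈ Set.Ioc (M.μ a) (M.μ 0)) :
    M.divRatio a x ≤ M.divRatio a y ↔ M.allocRatio a x ≤ M.allocRatio a y :=
  ((M.strictAntiOn_d_div_d (M.μ_mem a) (M.μ_mem 0)).le_iff_ge hx hy).trans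
    ((strictAntiOn_sub_div_sub (hx.1.trans_le hx.2)).le_iff_ge hx.1 hy.1).symm

lemma allocRatio_nonneg (hx : x ∈ Set.Ioc (M.μ a) (M.μ 0)) : 0 ≤ M.allocRatio a x :=
  div_nonneg (sub_nonneg.2 hx.2) (sub_pos.2 hx.1).le

lemma sub_x1 (h : N1 + Na ≠ 0) :
    M.μ 0 - M.x1 a N1 Na = Na * ((M.μ 0 - M.μ a) / (N1 + Na)) := by
  rw [x1]
  field_simp
  ring

lemma x1_sub (h : N1 + Na ≠ 0) :
    M.x1 a N1 Na - M.μ a = N1 * ((M.μ 0 - M.μ a) / (N1 + Na)) := by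
  rw [x1]
  field_simp
  ring

lemma x1_mem_Ioc (ha : a ≠ 0) (h1 : 0 < N1) (h2 : 0 ≤ Na) :
    M.x1 a N1 Na ∈ Set.Ioc (M.μ a) (M.μ 0) := by
  have hgap : 0 < M.μ 0 - M.μ a := sub_pos.2 (M.μ_best a ha)
  rw [Set.mem_Ioc, ← sub_pos, ← sub_nonneg (b := M.x1 a N1 Na), M.sub_x1 (by positivity),
    M.x1_sub (by positivity)]
  constructor <;> positivity

lemma allocRatio_x1 (ha : a ≠ 0) (h1 : 0 < N1) (h2 : 0 ≤ Na) :
    M.allocRatio a (M.x1 a N1 Na) = Na / N1 := by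
  have hgap : M.μ 0 - M.μ a ≠ 0 := (sub_pos.2 (M.μ_best a ha)).ne'
  rw [allocRatio, M.sub_x1 (by positivity), M.x1_sub (by positivity),
    mul_div_mul_right _ _ (by positivity)]

section Allocation

variable {Nv : Fin K → ℝ}

lemma g_eq_sum_divRatio_sub_one :
    M.g Nv = ∑ a ∈ alt K, M.divRatio a (M.x1 a (Nv 0) (Nv a)) - 1 :=
  rfl

lemma divRatio_x1_le_one_of_g_nonpos (h0 : 0 < Nv 0) (hNv : ∀ a ∈ alt K, 0 ≤ Nv a)
    (hg : M.g Nv ≤ 0) (ha : a ∈ alt K) : M.divRatio a (M.x1 a (Nv 0) (Nv a)) ≤ 1 := by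
  rw [g_eq_sum_divRatio_sub_one, sub_nonpos] at hg
  refine (Finset.single_le_sum (f := fun i ↦ M.divRatio i (M.x1 i (Nv 0) (Nv i)))
    (fun i hi ↦ ?_) ha).trans hg
  exact M.divRatio_nonneg (M.x1_mem_Ioc (mem_alt.1 hi) h0 (hNv i hi))

lemma inv_le_divRatio_x1_of_g_nonneg (hg : 0 ≤ M.g Nv)
    (hmax : ∀ i ∈ alt K,
      M.divRatio i (M.x1 i (Nv 0) (Nv i)) ≤ M.divRatio a (M.x1 a (Nv 0) (Nv a))) :
    ((K : ℝ) - 1)⁻¹ ≤ M.divRatio a (M.x1 a (Nv 0) (Nv a)) := by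
  have hK : (0 : ℝ) < K - 1 := sub_pos.2 (by exact_mod_cast M.two_le)
  rw [g_eq_sum_divRatio_sub_one, sub_nonneg] at hg
  rw [inv_le_iff_one_le_mul₀' hK]
  calc 1 ≤ ∑ i ∈ alt K, M.divRatio i (M.x1 i (Nv 0) (Nv i)) := hg
    _ ≤ (alt K).card • M.divRatio a (M.x1 a (Nv 0) (Nv a)) :=
      Finset.sum_le_card_nsmul _ _ _ hmax
    _ = (K - 1) * M.divRatio a (M.x1 a (Nv 0) (Nv a)) := by rw [nsmul_eq_mul, card_alt]

lemma inv_mul_sum_le_of_g_nonpos (h0 : 0 < Nv 0) (hNv : ∀ a ∈ alt K, 0 ≤ Nv a)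
    (hg : M.g Nv ≤ 0) {y : Fin K → ℝ} (hy : ∀ a ∈ alt K, y a ∈ Set.Ioc (M.μ a) (M.μ 0))
    (hdiv : ∀ a ∈ alt K, 1 ≤ M.divRatio a (y a)) :
    (1 + ∑ a ∈ alt K, M.allocRatio a (y a))⁻¹ * ∑ a, Nv a ≤ Nv 0 := by
  have hle : ∀ a ∈ alt K, Nv a ≤ M.allocRatio a (y a) * Nv 0 := fun a ha ↦ by
    rw [← div_le_iff₀ h0, ← M.allocRatio_x1 (mem_alt.1 ha) h0 (hNv a ha),
      ← M.divRatio_le_divRatio_iff (M.x1_mem_Ioc (mem_alt.1 ha) h0 (hNv a ha)) (hy a ha)]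
    exact (M.divRatio_x1_le_one_of_g_nonpos h0 hNv hg ha).trans (hdiv a ha)
  have hnonneg : 0 ≤ ∑ a ∈ alt K, M.allocRatio a (y a) :=
    Finset.sum_nonneg fun a ha ↦ M.allocRatio_nonneg (hy a ha)
  rw [inv_mul_le_iff₀ (by positivity), sum_eq_add_sum_alt, add_mul, one_mul, Finset.sum_mul]
  gcongr with a ha
  exact hle a ha

lemma le_inv_mul_sum_of_g_nonneg (h0 : 0 < Nv 0) (hNv : ∀ a ∈ alt K, 0 ≤ Nv a)
    (hg : 0 ≤ M.g Nv) (ha : a ∈ alt K)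
    (hmax : ∀ i ∈ alt K,
      M.divRatio i (M.x1 i (Nv 0) (Nv i)) ≤ M.divRatio a (M.x1 a (Nv 0) (Nv a)))
    (hx : x ∈ Set.Ioc (M.μ a) (M.μ 0)) (hdiv : M.divRatio a x ≤ ((K : ℝ) - 1)⁻¹) :
    Nv 0 ≤ (1 + M.allocRatio a x)⁻¹ * ∑ a, Nv a := by
  have hle : M.allocRatio a x * Nv 0 ≤ Nv a := by
    rw [← le_div_iff₀ h0, ← M.allocRatio_x1 (mem_alt.1 ha) h0 (hNv a ha),
      ← M.divRatio_le_divRatio_iff hx (M.x1_mem_Ioc (mem_alt.1 ha) h0 (hNv a ha))]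
    exact hdiv.trans (M.inv_le_divRatio_x1_of_g_nonneg hg hmax)
  have hnonneg := M.allocRatio_nonneg hx
  rw [le_inv_mul_iff₀ (by positivity), sum_eq_add_sum_alt, add_mul, one_mul]
  gcongr
  exact hle.trans (Finset.single_le_sum hNv ha)

end Allocation

end Bandit

/-- Lemma bounding `N₁` when `g = 0`: two-sided linear bounds on the
allocation to the best arm in terms of the total allocation. -/
theorem statement_7 {K : ℕ} [NeZero K] (M : Bandit K)
    (xa : Fin K → ℝ)
    (hxa_mem : ∀ a ∈ alt K, xa a ∈ Set.Ioo (M.μ a) (M.μ 0))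
    (hxa_eq : ∀ a ∈ alt K, M.d (M.μ 0) (xa a) = M.d (M.μ a) (xa a))
    (Nv : Fin K → ℝ) (hNv : ∀ a, 0 < Nv a) (hg : M.g Nv = 0)
    (atil : Fin K) (hatil : atil ∈ alt K)
    (hargmax : ∀ a ∈ alt K,
      M.d (M.μ 0) (M.x1 a (Nv 0) (Nv a)) / M.d (M.μ a) (M.x1 a (Nv 0) (Nv a)) ≤
        M.d (M.μ 0) (M.x1 atil (Nv 0) (Nv atil)) /
          M.d (M.μ atil) (M.x1 atil (Nv 0) (Nv atil)))
    (xt : ℝ) (hxt_mem : xt ∈ Set.Ioo (M.μ atil) (M.μ 0))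
    (hxt_eq : M.d (M.μ 0) xt = ((K : ℝ) - 1)⁻¹ * M.d (M.μ atil) xt) :
    (1 + ∑ a ∈ alt K, (M.μ 0 - xa a) / (xa a - M.μ a))⁻¹ * (∑ a, Nv a) ≤ Nv 0 ∧
    Nv 0 ≤ (1 + (M.μ 0 - xt) / (xt - M.μ atil))⁻¹ * (∑ a, Nv a) := by
  have hxa : ∀ a ∈ alt K, xa a ∈ Set.Ioc (M.μ a) (M.μ 0) :=
    fun a ha ↦ Set.Ioo_subset_Ioc_self (hxa_mem a ha)
  have hxt : xt ∈ Set.Ioc (M.μ atil) (M.μ 0) := Set.Ioo_subset_Ioc_self hxt_mem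
  have hdiv_xa : ∀ a ∈ alt K, M.divRatio a (xa a) = 1 := fun a ha ↦
    (M.divRatio_eq_iff (hxa a ha)).2 ((hxa_eq a ha).trans (one_mul _).symm)
  have hdiv_xt : M.divRatio atil xt = ((K : ℝ) - 1)⁻¹ := (M.divRatio_eq_iff hxt).2 hxt_eq
  have hnonneg : ∀ a ∈ alt K, 0 ≤ Nv a := fun a _ ↦ (hNv a).le
  exact ⟨M.inv_mul_sum_le_of_g_nonpos (hNv 0) hnonneg hg.le hxa fun a ha ↦ (hdiv_xa a ha).ge,
    M.le_inv_mul_sum_of_g_nonneg (hNv 0) hnonneg hg.ge hatil hargmax hxt hdiv_xt.le⟩
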